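/- Let s > 1 and suppose the series Σ_w exp(−ψ_s(κ(A_w))), summed over all nonempty words w with letters in {1,2,3}, diverges. Then for every β > 0 there exists x = (x1,x2,x3) ∈ ℝ³ with x1 ≥ x2 ≥ x3 and x1+x2+x3 = 0 satisfying |ψ_s(x) − 1| ≤ β, such that for infinitely many n ∈ ℕ there exists a finite set S of nonempty words with |S| ≥ exp((1−β)n) and ‖κ(A_w)/n − x‖ ≤ β for every w ∈ S. -/

import Mathlib

/-!
The sets of words off which the series converges form a filter, proper because the series diverges
and finer than the cofinite filter. Along it `ψ_s(κ(A_w)) → ∞`, and the normalized projections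
`κ(A_w) / ψ_s(κ(A_w))` stay in the section `ψ_s = 1` of the closed Weyl chamber, which is compact
as `s > 1`. They therefore have a cluster point `x` there, and it does not depend on `β`: for every
neighbourhood `U` of `x` the words `w` with `κ(A_w) / ⌊ψ_s(κ(A_w))⌋ ∈ U` still carry a divergent
series. If fewer than `exp (δ n)` of them, with `δ < 1`, had `⌊ψ_s(κ(A_w))⌋ = n` for all large `n`,
the series over these words would be dominated by `∑ exp ((δ - 1) n)`.

Two facts about matrices enter. The chamber inequalities `σ₁ ≥ σ₂ ≥ σ₃` amount to
`|det g| ‖g⁻¹‖ ≤ ‖g‖²` for `g = A_w` and for its inverse; this is Hadamard's inequality in an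
orthonormal basis starting with the direction of a given vector. And `‖A_w‖ → ∞`, because
multiplication by `A_i` replaces the `i`-th coordinate of a vector by the sum of all coordinates, so
that the coordinate sum of `A_w (1, 1, 1)` is at least the length of `w`.
-/

open Matrix MeasureTheory

noncomputable section

abbrev M3 := Matrix (Fin 3) (Fin 3) ℝ
abbrev E3 := EuclideanSpace ℝ (Fin 3)

/-- The Rauzy generators. -/
def A : Fin 3 → M3
  | 0 => !![1,1,1; 0,1,0; 0,0,1]
  | 1 => !![1,0,0; 1,1,1; 0,0,1]
  | 2 => !![1,0,0; 0,1,0; 1,1,1]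

/-- Product of the matrices along a word. -/
def Aw (w : List (Fin 3)) : M3 := (w.map A).prod

/-- Euclidean norm of a vector in `ℝ³`. -/
def enorm3 (v : Fin 3 → ℝ) : ℝ := Real.sqrt (v 0 ^ 2 + v 1 ^ 2 + v 2 ^ 2)

/-- Largest singular value = `ℓ²` operator norm. -/
def sval1 (g : M3) : ℝ := ‖(Matrix.toEuclideanLin g).toContinuousLinearMap‖

/-- Smallest singular value (for invertible `g`): `σ₃(g) = σ₁(g⁻¹)⁻¹`. -/
def sval3 (g : M3) : ℝ := (sval1 g⁻¹)⁻¹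

/-- Middle singular value (for invertible `g`): `σ₂ = |det g|·σ₁(g⁻¹)/σ₁(g)`. -/
def sval2 (g : M3) : ℝ := |g.det| * sval1 g⁻¹ / sval1 g

def basis3 (i : Fin 3) : Fin 3 → ℝ := Pi.single i 1

def omega3 (v : Fin 3 → ℝ) : ℝ := v 0 + v 1 + v 2

def ofE : E3 → (Fin 3 → ℝ) := WithLp.equiv 2 (Fin 3 → ℝ)
def toE : (Fin 3 → ℝ) → E3 := (WithLp.equiv 2 (Fin 3 → ℝ)).symm

/-- The standard 2-simplex in `ℝ³` (with the Euclidean metric). -/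
def simplex : Set E3 := {x | (∀ i, 0 ≤ ofE x i) ∧ omega3 (ofE x) = 1}

/-- The projective action of the word `w` on the simplex. -/
def fmap (w : List (Fin 3)) (x : E3) : E3 :=
  toE ((omega3 ((Aw w) *ᵥ ofE x))⁻¹ • ((Aw w) *ᵥ ofE x))

/-- The Rauzy gasket. -/
def gasket : Set E3 :=
  ⋂ n : ℕ, ⋃ w ∈ {w : List (Fin 3) | w.length = n + 1}, fmap w '' simplex

/-- Falconer's singular value function. -/
def phi (s : ℝ) (g : M3) : ℝ :=
  if s ≤ 1 then (sval2 g / sval1 g) ^ s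
  else (sval2 g / sval1 g) * (sval3 g / sval1 g) ^ (s - 1)

/-- The affinity exponent of the Rauzy semigroup. -/
def sA : ℝ :=
  sSup {s : ℝ | s ∈ Set.Ioc (0:ℝ) 2 ∧
    ¬ Summable fun w : {w : List (Fin 3) // w ≠ []} => phi s (Aw w.1)}

/-- A word has its last `k` letters not all the same. -/
def LastNotAllSame (w : List (Fin 3)) (k : ℕ) : Prop :=
  k ≤ w.length ∧ ¬ ∃ c, ∀ x ∈ w.drop (w.length - k), x = c

/-- A word's last two letters are different. -/
def LastTwoDiff (w : List (Fin 3)) : Prop :=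
  ∃ u a b, w = u ++ [a, b] ∧ a ≠ b

/-- The Cartan projection `κ(g) = (log σ₁, log σ₂, log σ₃)`. -/
def kappa (g : M3) : Fin 3 → ℝ :=
  ![Real.log (sval1 g), Real.log (sval2 g), Real.log (sval3 g)]

/-- The linear functional `ψ_s` on the Cartan algebra. -/
def psi (s : ℝ) (lam : Fin 3 → ℝ) : ℝ := (lam 0 - lam 1) + (s - 1) * (lam 0 - lam 2)

end

open Filter Topology
open scoped Matrix.Norms.L2Operator

/-! ### Divergent series -/

/-- The sets off which `F` is summable. A series diverges iff this filter is nontrivial, and a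
property then holds frequently along it iff the terms having it still form a divergent series. -/
def cosummable {W E : Type*} [AddCommGroup E] [UniformSpace E] [IsUniformAddGroup E]
    [CompleteSpace E] (F : W → E) : Filter W :=
  Filter.comk (fun t => Summable (t.indicator F)) (by simp)
    (fun t ht r hr => by
      simpa only [Set.indicator_indicator, Set.inter_eq_left.2 hr] using ht.indicator r)
    (fun t ht r hr => by
      have hdisj : Disjoint t (r \ t) := Set.disjoint_sdiff_right
      rw [← Set.union_sdiff_self, Set.indicator_union_of_disjoint hdisj]
      refine ht.add ?_
      simpa only [Set.indicator_indicator, Set.inter_eq_left.2 Set.sdiff_subset]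
        using hr.indicator (r \ t))

section Cosummable

variable {W E : Type*} [AddCommGroup E] [UniformSpace E] [IsUniformAddGroup E]
  [CompleteSpace E] {F : W → E}

lemma cosummable_neBot (hF : ¬ Summable F) : (cosummable F).NeBot :=
  neBot_iff.2 fun h => hF <| by
    simpa [cosummable] using (empty_mem_iff_bot.2 h : ∅ ∈ cosummable F)

lemma cosummable_le_cofinite : cosummable F ≤ cofinite := fun _ ht =>
  mem_comk.2 <| summable_of_hasFiniteSupport <|
    (mem_cofinite.1 ht).subset Set.support_indicator_subset

lemma not_summable_subtype_of_frequently_cosummable {p : W → Prop}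
    (h : ∃ᶠ w in cosummable F, p w) : ¬ Summable fun w : {w // p w} => F w := by
  intro hp
  refine h (mem_comk.2 ?_)
  have hcompl : {w | ¬ p w}ᶜ = {w | p w} := Set.ext fun _ => not_not
  rw [hcompl]
  exact summable_subtype_iff_indicator.1 hp

end Cosummable

lemma finite_setOf_floor_eq {W : Type*} {f : W → ℝ} (hf : Tendsto f cofinite atTop) (n : ℕ) :
    {w | ⌊f w⌋₊ = n}.Finite := by
  refine (eventually_cofinite.1 (hf.eventually_ge_atTop (n + 1))).subset fun w hw => ?_
  exact not_le.2 ((Nat.lt_floor_add_one (f w)).trans_eq (by rw [hw.out]))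

lemma infinite_exp_le_card_floor_eq {W : Type*} {f : W → ℝ} (hf : Tendsto f cofinite atTop)
    (hdiv : ¬ Summable fun w => Real.exp (-f w)) {δ : ℝ} (hδ : δ < 1) :
    {n : ℕ | ∃ S : Finset W, Real.exp (δ * n) ≤ S.card ∧ ∀ w ∈ S, ⌊f w⌋₊ = n}.Infinite := by
  intro hfin
  have hfiber := finite_setOf_floor_eq hf
  refine hdiv ((summable_partition (fun _ => (Real.exp_pos _).le)
    (s := fun n : ℕ => {w | ⌊f w⌋₊ = n}) fun w => ⟨_, rfl, fun _ h => h.symm⟩).2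
    ⟨fun n => ?_, ?_⟩)
  · have := (hfiber n).to_subtype
    exact .of_finite
  have hgeom : Summable fun n : ℕ => Real.exp (δ - 1) ^ n :=
    summable_geometric_of_lt_one (Real.exp_pos _).le (Real.exp_lt_one_iff.2 (sub_neg.2 hδ))
  refine .of_norm_bounded_eventually_nat hgeom ?_
  rw [← Nat.cofinite_eq_atTop]
  filter_upwards [hfin.compl_mem_cofinite, (Set.finite_singleton 0).compl_mem_cofinite]
    with n hcard hn
  have hterm : ∀ w ∈ (hfiber n).toFinset, Real.exp (-f w) ≤ Real.exp (-n) := fun w hw =>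
    Real.exp_le_exp.2 (neg_le_neg ((Nat.floor_eq_iff' hn).1 ((hfiber n).mem_toFinset.1 hw)).1)
  have hlt : ((hfiber n).toFinset.card : ℝ) < Real.exp (δ * n) := by
    by_contra! hle
    exact hcard ⟨_, hle, fun w hw => (hfiber n).mem_toFinset.1 hw⟩
  rw [Real.norm_of_nonneg (tsum_nonneg fun _ => (Real.exp_pos _).le)]
  calc ∑' w : {w | ⌊f w⌋₊ = n}, Real.exp (-f w)
      = ∑ w ∈ (hfiber n).toFinset, Real.exp (-f w) := by
        rw [← Finset.tsum_subtype', (hfiber n).coe_toFinset]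
    _ ≤ (hfiber n).toFinset.card * Real.exp (-n) := by
        simpa using Finset.sum_le_card_nsmul _ _ _ hterm
    _ ≤ Real.exp (δ * n) * Real.exp (-n) := by gcongr
    _ = Real.exp (δ - 1) ^ n := by
        rw [← Real.exp_add, ← Real.exp_nat_mul]
        ring_nf

lemma exists_mem_forall_nhds_infinite_exp_le_card {W V : Type*} [TopologicalSpace V]
    [MulAction ℝ V] [ContinuousSMul ℝ V] {K : Set V} (hK : IsCompact K) {f : W → ℝ} {v : W → V}
    (hf : Tendsto f cofinite atTop) (hdiv : ¬ Summable fun w => Real.exp (-f w))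
    (hv : ∀ᶠ w in cofinite, (f w)⁻¹ • v w ∈ K) :
    ∃ x ∈ K, ∀ U ∈ 𝓝 x, ∀ δ < (1 : ℝ),
      {n : ℕ | ∃ S : Finset W, Real.exp (δ * n) ≤ S.card ∧
        ∀ w ∈ S, (n : ℝ)⁻¹ • v w ∈ U}.Infinite := by
  have := cosummable_neBot hdiv
  let l := Ultrafilter.of (cosummable fun w => Real.exp (-f w))
  have hl : l ≤ cosummable fun w => Real.exp (-f w) := Ultrafilter.of_le _
  have hlf : Tendsto f l atTop := hf.mono_left (hl.trans cosummable_le_cofinite)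
  obtain ⟨x, hxK, hx⟩ := hK.ultrafilter_le_nhds (l.map fun w => (f w)⁻¹ • v w)
    (le_principal_iff.2 (hl.trans cosummable_le_cofinite hv))
  refine ⟨x, hxK, fun U hU δ hδ => ?_⟩
  have hratio : Tendsto (fun w => (⌊f w⌋₊ : ℝ)⁻¹ * f w) l (𝓝 1) := by
    simpa [Function.comp_def, div_eq_mul_inv, mul_comm] using
      (tendsto_nat_floor_div_atTop.comp hlf).inv₀ one_ne_zero
  have hfloor : Tendsto (fun w => (⌊f w⌋₊ : ℝ)⁻¹ • v w) l (𝓝 x) := by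
    refine (one_smul ℝ x ▸ hratio.smul (show Tendsto _ _ (𝓝 x) from hx)).congr' ?_
    filter_upwards [hlf.eventually_gt_atTop 0] with w hw
    rw [smul_smul, mul_assoc, mul_inv_cancel₀ hw.ne', mul_one]
  have hfreq : ∃ᶠ w in cosummable fun w => Real.exp (-f w), (⌊f w⌋₊ : ℝ)⁻¹ • v w ∈ U :=
    ((hfloor.eventually hU).frequently).filter_mono hl
  refine (infinite_exp_le_card_floor_eq (hf.comp Subtype.val_injective.tendsto_cofinite)
    (not_summable_subtype_of_frequently_cosummable hfreq) hδ).mono ?_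
  rintro n ⟨S, hcard, hS⟩
  refine ⟨S.map (.subtype _), by rwa [Finset.card_map], ?_⟩
  rintro _ hw
  obtain ⟨⟨w, hwU⟩, hwS, rfl⟩ := Finset.mem_map.1 hw
  rw [← hS _ hwS]
  exact hwU

/-! ### Singular values -/

lemma abs_det_le_prod_norm_apply {E ι : Type*} [NormedAddCommGroup E] [InnerProductSpace ℝ E]
    [Fintype ι] (b : OrthonormalBasis ι ℝ E) (T : E →L[ℝ] E) : |T.det| ≤ ∏ i, ‖T (b i)‖ := by
  classical
  have : Fact (Module.finrank ℝ E = Fintype.card ι) := ⟨Module.finrank_eq_card_basis b.toBasis⟩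
  let c := b.reindex (Fintype.equivFin ι)
  have hdet : c.toBasis.det (T ∘ c) = T.det := by
    have := c.toBasis.det_comp (T : E →ₗ[ℝ] E) c.toBasis
    rwa [c.toBasis.det_self, mul_one, c.coe_toBasis] at this
  calc |T.det| = |c.toBasis.orientation.volumeForm (T ∘ c)| := by
        rw [c.toBasis.orientation.volumeForm_robust c rfl, hdet]
    _ ≤ ∏ i, ‖T (c i)‖ := c.toBasis.orientation.abs_volumeForm_apply_le _
    _ = ∏ i, ‖T (b i)‖ := by
        simpa [c] using (Fintype.equivFin ι).symm.prod_comp fun i => ‖T (b i)‖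

lemma exists_orthonormalBasis_norm_smul_eq {E ι : Type*} [NormedAddCommGroup E]
    [InnerProductSpace ℝ E] [FiniteDimensional ℝ E] [Fintype ι]
    (hι : Module.finrank ℝ E = Fintype.card ι) (i : ι) {v : E} (hv : v ≠ 0) :
    ∃ b : OrthonormalBasis ι ℝ E, ‖v‖ • b i = v := by
  have hunit : Orthonormal ℝ (({i} : Set ι).domRestrict fun _ => ‖v‖⁻¹ • v) :=
    ⟨fun _ => norm_smul_inv_norm hv, fun j k hjk => (hjk (Subsingleton.elim j k)).elim⟩
  obtain ⟨b, hb⟩ := hunit.exists_orthonormalBasis_extension_of_card_eq hι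
  exact ⟨b, by rw [hb i rfl, smul_inv_smul₀ (norm_ne_zero_iff.2 hv)]⟩

lemma abs_det_mul_norm_le {E : Type*} [NormedAddCommGroup E] [InnerProductSpace ℝ E]
    [FiniteDimensional ℝ E] (T : E →L[ℝ] E) (v : E) :
    |T.det| * ‖v‖ ≤ ‖T‖ ^ (Module.finrank ℝ E - 1) * ‖T v‖ := by
  rcases eq_or_ne v 0 with rfl | hv
  · simp
  have : Nontrivial E := ⟨v, 0, hv⟩
  let i : Fin (Module.finrank ℝ E) := ⟨0, Module.finrank_pos⟩
  obtain ⟨b, hb⟩ := exists_orthonormalBasis_norm_smul_eq (Fintype.card_fin _).symm i hv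
  have hTv : ‖T v‖ = ‖v‖ * ‖T (b i)‖ := by
    conv_lhs => rw [← hb, map_smul, norm_smul, norm_norm]
  have hrest : ∏ j ∈ {i}ᶜ, ‖T (b j)‖ ≤ ‖T‖ ^ (Module.finrank ℝ E - 1) := by
    calc ∏ j ∈ {i}ᶜ, ‖T (b j)‖ ≤ ∏ _j ∈ ({i}ᶜ : Finset (Fin (Module.finrank ℝ E))), ‖T‖ :=
          Finset.prod_le_prod (fun _ _ => norm_nonneg _) fun j _ => by
            simpa using T.le_opNorm (b j)
      _ = ‖T‖ ^ (Module.finrank ℝ E - 1) := by simp [Finset.card_compl]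
  calc |T.det| * ‖v‖ ≤ (∏ j, ‖T (b j)‖) * ‖v‖ := by
        gcongr
        exact abs_det_le_prod_norm_apply b T
    _ = (∏ j ∈ {i}ᶜ, ‖T (b j)‖) * ‖T v‖ := by
        rw [Fintype.prod_eq_mul_prod_compl i, hTv]
        ring
    _ ≤ ‖T‖ ^ (Module.finrank ℝ E - 1) * ‖T v‖ := by gcongr

lemma abs_det_mul_l2_opNorm_inv_le {n : Type*} [Fintype n] [DecidableEq n] (g : Matrix n n ℝ) :
    |g.det| * ‖g⁻¹‖ ≤ ‖g‖ ^ (Fintype.card n - 1) := by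
  rcases eq_or_ne g.det 0 with h0 | h0
  · rw [h0, abs_zero, zero_mul]
    positivity
  have hdet : (toEuclideanCLM (𝕜 := ℝ) g).det = g.det := LinearMap.det_toLin _ g
  rw [mul_comm, ← le_div_iff₀ (abs_pos.2 h0)]
  refine ContinuousLinearMap.opNorm_le_bound _ (by positivity) fun v => ?_
  rw [div_mul_eq_mul_div, le_div_iff₀ (abs_pos.2 h0), mul_comm]
  have hv : toEuclideanCLM (𝕜 := ℝ) g (toEuclideanCLM (𝕜 := ℝ) g⁻¹ v) = v := by
    rw [← mul_apply_eq_comp, ← map_mul, mul_nonsing_inv g h0.isUnit, map_one,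
      one_apply_eq_self]
  have := abs_det_mul_norm_le (toEuclideanCLM (𝕜 := ℝ) g) (toEuclideanCLM (𝕜 := ℝ) g⁻¹ v)
  rwa [hdet, hv, finrank_euclideanSpace] at this

lemma dotProduct_mulVec_le {m n : Type*} [Fintype m] [Fintype n] [DecidableEq n]
    (g : Matrix m n ℝ) (u : m → ℝ) (v : n → ℝ) :
    u ⬝ᵥ g *ᵥ v ≤ ‖g‖ * ‖WithLp.toLp 2 v‖ * ‖WithLp.toLp 2 u‖ :=
  calc u ⬝ᵥ g *ᵥ v = inner ℝ (WithLp.toLp 2 (g *ᵥ v)) (WithLp.toLp 2 u) := by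
        rw [EuclideanSpace.inner_toLp_toLp, star_trivial]
    _ ≤ ‖WithLp.toLp 2 (g *ᵥ v)‖ * ‖WithLp.toLp 2 u‖ := real_inner_le_norm _ _
    _ ≤ ‖g‖ * ‖WithLp.toLp 2 v‖ * ‖WithLp.toLp 2 u‖ := by
        gcongr
        exact l2_opNorm_mulVec g (WithLp.toLp 2 v)

/-! ### The Cartan projection -/

lemma sval1_eq_l2_opNorm (g : M3) : sval1 g = ‖g‖ := rfl

lemma sval1_pos {g : M3} (hg : g.det ≠ 0) : 0 < sval1 g := by
  rw [sval1_eq_l2_opNorm, norm_pos_iff]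
  rintro rfl
  simp at hg

lemma abs_det_mul_sval1_inv_le (g : M3) : |g.det| * sval1 g⁻¹ ≤ sval1 g ^ 2 := by
  simpa only [sval1_eq_l2_opNorm, Fintype.card_fin] using abs_det_mul_l2_opNorm_inv_le g

lemma det_inv_ne_zero {g : M3} (hg : g.det ≠ 0) : g⁻¹.det ≠ 0 :=
  (g.isUnit_nonsing_inv_det hg.isUnit).ne_zero

lemma sval2_le_sval1 {g : M3} (hg : g.det ≠ 0) : sval2 g ≤ sval1 g := by
  rw [sval2, div_le_iff₀ (sval1_pos hg), ← sq]
  exact abs_det_mul_sval1_inv_le g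

lemma sval2_inv {g : M3} (hg : g.det ≠ 0) : sval2 g⁻¹ = (sval2 g)⁻¹ := by
  rw [sval2, sval2, nonsing_inv_nonsing_inv g hg.isUnit, det_nonsing_inv, Ring.inverse_eq_inv',
    abs_inv]
  field_simp

lemma sval2_pos {g : M3} (hg : g.det ≠ 0) : 0 < sval2 g :=
  div_pos (mul_pos (abs_pos.2 hg) (sval1_pos (det_inv_ne_zero hg))) (sval1_pos hg)

lemma sval3_pos {g : M3} (hg : g.det ≠ 0) : 0 < sval3 g :=
  inv_pos.2 (sval1_pos (det_inv_ne_zero hg))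

lemma sval3_le_sval2 {g : M3} (hg : g.det ≠ 0) : sval3 g ≤ sval2 g := by
  rw [sval3, inv_le_comm₀ (sval1_pos (det_inv_ne_zero hg)) (sval2_pos hg), ← sval2_inv hg]
  exact sval2_le_sval1 (det_inv_ne_zero hg)

lemma sval1_mul_sval2_mul_sval3 {g : M3} (hg : g.det ≠ 0) :
    sval1 g * sval2 g * sval3 g = |g.det| := by
  have h1 := (sval1_pos hg).ne'
  have h2 := (sval1_pos (det_inv_ne_zero hg)).ne'
  rw [sval2, sval3]
  field_simp

lemma sum_kappa {g : M3} (hg : g.det ≠ 0) :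
    kappa g 0 + kappa g 1 + kappa g 2 = Real.log |g.det| := by
  have h1 := (sval1_pos hg).ne'
  have h2 := (sval2_pos hg).ne'
  have h3 := (sval3_pos hg).ne'
  rw [← sval1_mul_sval2_mul_sval3 hg, Real.log_mul (mul_ne_zero h1 h2) h3, Real.log_mul h1 h2]
  rfl

/-- The closed positive Weyl chamber of `SL(3, ℝ)`, as a set of diagonals; it contains the Cartan
projections of the matrices of determinant `±1`. -/
def weylChamber : Set (Fin 3 → ℝ) := {x | x 1 ≤ x 0 ∧ x 2 ≤ x 1 ∧ x 0 + x 1 + x 2 = 0}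

lemma kappa_mem_weylChamber {g : M3} (hg : |g.det| = 1) : kappa g ∈ weylChamber := by
  have h0 : g.det ≠ 0 := abs_ne_zero.1 (hg.trans_ne one_ne_zero)
  refine ⟨Real.log_le_log (sval2_pos h0) (sval2_le_sval1 h0),
    Real.log_le_log (sval3_pos h0) (sval3_le_sval2 h0), ?_⟩
  rw [sum_kappa h0, hg, Real.log_one]

lemma smul_mem_weylChamber {c : ℝ} (hc : 0 ≤ c) {x : Fin 3 → ℝ} (hx : x ∈ weylChamber) :
    c • x ∈ weylChamber := by
  obtain ⟨h10, h21, hsum⟩ := hx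
  refine ⟨mul_le_mul_of_nonneg_left h10 hc, mul_le_mul_of_nonneg_left h21 hc, ?_⟩
  simp only [Pi.smul_apply, ← smul_add, hsum, smul_zero]

lemma isClosed_weylChamber : IsClosed weylChamber :=
  (isClosed_le (continuous_apply 1) (continuous_apply 0)).inter <|
    (isClosed_le (continuous_apply 2) (continuous_apply 1)).inter <|
      isClosed_eq (by fun_prop) continuous_const

lemma abs_apply_le_of_mem_weylChamber {x : Fin 3 → ℝ} (hx : x ∈ weylChamber) (i : Fin 3) :
    |x i| ≤ x 0 - x 2 := by
  obtain ⟨h10, h21, hsum⟩ := hx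
  rw [abs_le]
  fin_cases i <;> constructor <;> dsimp only [Fin.reduceFinMk, Fin.zero_eta, Fin.mk_one] <;>
    linarith

lemma psi_smul (s c : ℝ) (x : Fin 3 → ℝ) : psi s (c • x) = c * psi s x := by
  simp only [psi, Pi.smul_apply, smul_eq_mul]
  ring

lemma mul_abs_apply_le_psi {s : ℝ} (hs : 1 ≤ s) {x : Fin 3 → ℝ} (hx : x ∈ weylChamber)
    (i : Fin 3) : (s - 1) * |x i| ≤ psi s x :=
  calc (s - 1) * |x i| ≤ (s - 1) * (x 0 - x 2) :=
        mul_le_mul_of_nonneg_left (abs_apply_le_of_mem_weylChamber hx i) (sub_nonneg.2 hs)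
    _ ≤ psi s x := le_add_of_nonneg_left (sub_nonneg.2 hx.1)

lemma isCompact_weylChamber_inter_psi_eq {s : ℝ} (hs : 1 < s) (c : ℝ) :
    IsCompact (weylChamber ∩ {x | psi s x = c}) := by
  have hclosed : IsClosed {x | psi s x = c} :=
    isClosed_eq (by unfold psi; fun_prop) continuous_const
  refine (isCompact_univ_pi fun _ => isCompact_Icc (a := -(c / (s - 1))) (b := c / (s - 1)))
    |>.of_isClosed_subset (isClosed_weylChamber.inter hclosed) ?_
  rintro x ⟨hx, rfl⟩ i -
  rw [Set.mem_Icc, ← abs_le, le_div_iff₀' (sub_pos.2 hs)]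
  exact mul_abs_apply_le_psi hs.le hx i

lemma tendsto_psi_kappa_atTop {W : Type*} {l : Filter W} {g : W → M3} {s : ℝ} (hs : 1 < s)
    (hdet : ∀ w, |(g w).det| = 1) (hg : Tendsto (fun w => sval1 (g w)) l atTop) :
    Tendsto (fun w => psi s (kappa (g w))) l atTop := by
  refine tendsto_atTop_mono (fun w => ?_)
    ((Real.tendsto_log_atTop.comp hg).const_mul_atTop (sub_pos.2 hs))
  calc (s - 1) * Real.log (sval1 (g w)) ≤ (s - 1) * |kappa (g w) 0| :=
        mul_le_mul_of_nonneg_left (le_abs_self _) (sub_pos.2 hs).le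
    _ ≤ psi s (kappa (g w)) := mul_abs_apply_le_psi hs.le (kappa_mem_weylChamber (hdet w)) 0

/-! ### Words -/

lemma A_mulVec (i : Fin 3) (v : Fin 3 → ℝ) : A i *ᵥ v = Function.update v i (omega3 v) := by
  ext j
  fin_cases i <;> fin_cases j <;>
    simp [A, omega3, mulVec, dotProduct, Fin.sum_univ_three]

lemma Aw_cons_mulVec (i : Fin 3) (w : List (Fin 3)) (v : Fin 3 → ℝ) :
    Aw (i :: w) *ᵥ v = Function.update (Aw w *ᵥ v) i (omega3 (Aw w *ᵥ v)) := by
  rw [← A_mulVec, mulVec_mulVec, Aw, List.map_cons, List.prod_cons, Aw]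

lemma omega3_update (v : Fin 3 → ℝ) (i : Fin 3) (c : ℝ) :
    omega3 (Function.update v i c) = omega3 v - v i + c := by
  fin_cases i <;> simp [omega3] <;> ring

lemma det_Aw (w : List (Fin 3)) : (Aw w).det = 1 := by
  have hA (i : Fin 3) : (A i).det = 1 := by fin_cases i <;> simp [A, det_fin_three]
  induction w with
  | nil => simp [Aw]
  | cons i w ih => rw [Aw, List.map_cons, List.prod_cons, det_mul, hA, one_mul, ← Aw, ih]

lemma apply_add_one_le_omega3 {v : Fin 3 → ℝ} (hv : 1 ≤ v) (i : Fin 3) : v i + 1 ≤ omega3 v := by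
  have h (j : Fin 3) : 1 ≤ v j := hv j
  have h0 := h 0
  have h1 := h 1
  have h2 := h 2
  rw [omega3]
  fin_cases i <;> dsimp only [Fin.reduceFinMk, Fin.zero_eta, Fin.mk_one] <;> linarith

lemma one_le_Aw_mulVec_one (w : List (Fin 3)) : 1 ≤ Aw w *ᵥ 1 := by
  induction w with
  | nil => simp [Aw]
  | cons i w ih =>
    rw [Aw_cons_mulVec, le_update_iff]
    exact ⟨(ih i).trans (le_of_add_le_of_nonneg_left (apply_add_one_le_omega3 ih i) zero_le_one),
      fun j _ => ih j⟩

lemma length_le_omega3_Aw_mulVec_one (w : List (Fin 3)) :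
    (w.length : ℝ) ≤ omega3 (Aw w *ᵥ 1) := by
  induction w with
  | nil => simp [Aw, omega3, add_nonneg]
  | cons i w ih =>
    rw [Aw_cons_mulVec, omega3_update, List.length_cons, Nat.cast_succ]
    linarith [apply_add_one_le_omega3 (one_le_Aw_mulVec_one w) i]

lemma length_le_three_mul_sval1_Aw (w : List (Fin 3)) : (w.length : ℝ) ≤ 3 * sval1 (Aw w) :=
  calc (w.length : ℝ) ≤ omega3 (Aw w *ᵥ 1) := length_le_omega3_Aw_mulVec_one w
    _ = 1 ⬝ᵥ Aw w *ᵥ 1 := by simp [omega3, dotProduct, Fin.sum_univ_three]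
    _ ≤ sval1 (Aw w) * ‖WithLp.toLp 2 (1 : Fin 3 → ℝ)‖ * ‖WithLp.toLp 2 (1 : Fin 3 → ℝ)‖ :=
        dotProduct_mulVec_le (Aw w) 1 1
    _ = 3 * sval1 (Aw w) := by
        rw [mul_assoc, ← sq, EuclideanSpace.norm_sq_eq]
        simp [mul_comm]

lemma tendsto_length_cofinite_atTop {α : Type*} [Finite α] :
    Tendsto (List.length : List α → ℕ) cofinite atTop := by
  refine tendsto_atTop.2 fun n => ?_
  filter_upwards [(List.finite_length_lt α n).compl_mem_cofinite] with w hw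
  exact not_lt.1 hw

lemma tendsto_sval1_Aw_cofinite_atTop : Tendsto (fun w => sval1 (Aw w)) cofinite atTop := by
  refine .atTop_of_const_mul₀ three_pos (tendsto_atTop_mono length_le_three_mul_sval1_Aw ?_)
  exact tendsto_natCast_atTop_atTop.comp tendsto_length_cofinite_atTop

/-! ### Approximate sets -/

lemma setOf_enorm3_sub_le_mem_nhds (x : Fin 3 → ℝ) {β : ℝ} (hβ : 0 < β) :
    {y | enorm3 (fun i => y i - x i) ≤ β} ∈ 𝓝 x := by
  have hcont : Continuous fun y : Fin 3 → ℝ => enorm3 fun i => y i - x i := by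
    unfold enorm3
    fun_prop
  exact hcont.continuousAt.eventually_le_const (by simpa [enorm3] using hβ)

theorem approximate_sets_exist_general {W : Type*} (g : W → M3) (hdet : ∀ w, |(g w).det| = 1)
    (hg : Tendsto (fun w => sval1 (g w)) cofinite atTop) (s : ℝ) (hs : 1 < s)
    (hdiv : ¬ Summable fun w => Real.exp (-(psi s (kappa (g w))))) :
    ∃ x : Fin 3 → ℝ, x 1 ≤ x 0 ∧ x 2 ≤ x 1 ∧ x 0 + x 1 + x 2 = 0 ∧ psi s x = 1 ∧
      ∀ β > (0 : ℝ), {n : ℕ | ∃ S : Finset W, Real.exp ((1 - β) * n) ≤ (S.card : ℝ) ∧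
        ∀ w ∈ S, enorm3 (fun i => kappa (g w) i / n - x i) ≤ β}.Infinite := by
  have hψ := tendsto_psi_kappa_atTop hs hdet hg
  have hsection : ∀ᶠ w in cofinite,
      (psi s (kappa (g w)))⁻¹ • kappa (g w) ∈ weylChamber ∩ {x | psi s x = 1} := by
    filter_upwards [hψ.eventually_gt_atTop 0] with w hw
    exact ⟨smul_mem_weylChamber (inv_pos.2 hw).le (kappa_mem_weylChamber (hdet w)),
      (psi_smul _ _ _).trans (inv_mul_cancel₀ hw.ne')⟩
  obtain ⟨x, ⟨⟨h10, h21, hsum⟩, hx1⟩, hx⟩ := exists_mem_forall_nhds_infinite_exp_le_card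
    (isCompact_weylChamber_inter_psi_eq hs 1) hψ hdiv hsection
  refine ⟨x, h10, h21, hsum, hx1, fun β hβ => ?_⟩
  simpa [div_eq_inv_mul] using
    hx _ (setOf_enorm3_sub_le_mem_nhds x hβ) (1 - β) (sub_lt_self 1 hβ)

/-- If the series `Σ_w exp(−ψ_s(κ(A_w)))` diverges for some `s > 1`, then for every
`β > 0` there is a suitable `x` in the positive Weyl chamber with `|ψ_s(x) − 1| ≤ β`
and infinitely many `n` admitting an `(n,β,x)`-approximate set of words. -/
theorem approximate_sets_exist (s : ℝ) (hs : 1 < s)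
    (hdiv : ¬ Summable fun w : {w : List (Fin 3) // w ≠ []} =>
      Real.exp (-(psi s (kappa (Aw w.1))))) :
    ∀ β > (0:ℝ), ∃ x : Fin 3 → ℝ,
      x 1 ≤ x 0 ∧ x 2 ≤ x 1 ∧ x 0 + x 1 + x 2 = 0 ∧ |psi s x - 1| ≤ β ∧
      {n : ℕ | ∃ S : Finset {w : List (Fin 3) // w ≠ []},
        Real.exp ((1 - β) * n) ≤ (S.card : ℝ) ∧
        ∀ w ∈ S, enorm3 (fun i => kappa (Aw w.1) i / n - x i) ≤ β}.Infinite := by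
  intro β hβ
  obtain ⟨x, h10, h21, hsum, hψ, hx⟩ := approximate_sets_exist_general
    (fun w : {w : List (Fin 3) // w ≠ []} => Aw w.1) (fun w => by rw [det_Aw, abs_one])
    (tendsto_sval1_Aw_cofinite_atTop.comp Subtype.val_injective.tendsto_cofinite) s hs hdiv
  exact ⟨x, h10, h21, hsum, by simpa [hψ] using hβ.le, hx β hβ⟩
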